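/- Let d be a positive integer, ν₁, …, ν_d real numbers with ν_j > −1 for each j, set ν = ν₁ + ⋯ + ν_d, let λ be a complex number with Re(λ) + ν > −1, let a₁, …, a_d > 0 and p > a₁ + ⋯ + a_d be real. Then ∫₀^∞ e^{−px} x^λ ∏_{j=1}^d I_{ν_j}(a_j x) dx = (Γ(λ+ν+1)/(2^ν p^{λ+ν+1})) · (∏_{j=1}^d a_j^{ν_j}/Γ(ν_j+1)) · ∑_{n₁≥0} ⋯ ∑_{n_d≥0} ((λ+ν+1)/2)_{n₁+⋯+n_d} ((λ+ν)/2+1)_{n₁+⋯+n_d} / ((ν₁+1)_{n₁} ⋯ (ν_d+1)_{n_d}) · ∏_{j=1}^d (a_j²/p²)^{n_j}/(n_j!), and the integral converges absolutely. -/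

import Mathlib

/-!
All terms of the series of `I_ν` are nonnegative, and `k! (ν+1)_k` is, up to a linear factor in `k`,
at least `(2k)! / 4 ^ k`. Comparing with the series of `cosh` gives `I_ν(x) ≤ C x ^ ν e ^ (r x)` for
every `r > 1`. As `p > ∑ a_j`, an `r` close enough to `1` leaves an integrable majorant of the
integrand, and nonnegativity of the terms then allows expanding the product of the series and
integrating term by term. With `z = λ + ν + 1` and `N = ∑ n_j`, each term is a multiple of
`Γ(z + 2N) / p ^ (z + 2N)`, and the duplication formula `(z)_{2N} = 4 ^ N (z/2)_N ((z+1)/2)_N`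
turns it into a term of the Lauricella series.
-/

open MeasureTheory Real Finset Complex

/-- The modified Bessel function of the first kind of real order `ν`,
`I_ν(x) = ∑_{k ≥ 0} (x/2)^{ν+2k} / (k! Γ(ν+k+1))` (for `x > 0`). -/
noncomputable def besselI (ν x : ℝ) : ℝ :=
  ∑' k : ℕ, (x / 2) ^ (ν + 2 * (k : ℝ)) / ((k.factorial : ℝ) * Real.Gamma (ν + k + 1))

theorem mul_ascPochhammer_eval_add_one {R : Type*} [CommSemiring R] (n : ℕ) (s : R) :
    s * (ascPochhammer R n).eval (s + 1) = (ascPochhammer R n).eval s * (s + n) := by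
  rw [← ascPochhammer_succ_eval, ascPochhammer_succ_left]
  simp

theorem ascPochhammer_two_mul_eval {K : Type*} [Field K] [NeZero (2 : K)] (n : ℕ) (z : K) :
    (ascPochhammer K (2 * n)).eval z =
      4 ^ n * ((ascPochhammer K n).eval (z / 2) * (ascPochhammer K n).eval ((z + 1) / 2)) := by
  induction n with
  | zero => simp
  | succ n ih =>
    rw [mul_add_one, ascPochhammer_succ_eval, ascPochhammer_succ_eval, ih,
      ascPochhammer_succ_eval, ascPochhammer_succ_eval]
    have h2 : (2 : K) ≠ 0 := NeZero.ne _
    push_cast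
    field_simp
    ring

theorem factorial_le_ascPochhammer_eval {R : Type*} [Semiring R] [PartialOrder R]
    [IsStrictOrderedRing R] {s : R} (hs : 1 ≤ s) (n : ℕ) :
    (n.factorial : R) ≤ (ascPochhammer R n).eval s := by
  induction n with
  | zero => simp
  | succ n ih =>
    rw [Nat.factorial_succ, ascPochhammer_succ_eval, Nat.cast_mul, Nat.cast_comm, Nat.cast_succ,
      add_comm (n : R)]
    gcongr
    exact n.factorial.cast_nonneg.trans ih

theorem ofReal_ascPochhammer_eval (n : ℕ) (s : ℝ) :
    (((ascPochhammer ℝ n).eval s : ℝ) : ℂ) = (ascPochhammer ℂ n).eval (s : ℂ) :=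
  ((ascPochhammer_eval₂ ofRealHom n (s : ℂ)).trans (Polynomial.eval₂_at_apply ofRealHom s)).symm

theorem complexGamma_add_natCast {z : ℂ} (hz : 0 < z.re) (n : ℕ) :
    Complex.Gamma (z + n) = Complex.Gamma z * (ascPochhammer ℂ n).eval z := by
  have hz' (k : ℕ) : z ≠ -k := by
    rintro rfl
    exact hz.not_ge (by simp)
  rw [← Complex.Gamma_add_nat_div_Gamma_eq z hz',
    mul_div_cancel₀ _ (Complex.Gamma_ne_zero_of_re_pos hz)]

theorem realGamma_add_natCast {s : ℝ} (hs : 0 < s) (n : ℕ) :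
    Real.Gamma (s + n) = Real.Gamma s * (ascPochhammer ℝ n).eval s := by
  have h := complexGamma_add_natCast (z := s) (by simpa) n
  rw [← ofReal_ascPochhammer_eval, ← ofReal_natCast, ← ofReal_add, Complex.Gamma_ofReal,
    Complex.Gamma_ofReal] at h
  exact_mod_cast h

theorem factorial_two_mul_le_four_pow_mul (n : ℕ) :
    (2 * n).factorial ≤ 4 ^ n * n.factorial ^ 2 := by
  rw [two_mul, ← Nat.add_choose_mul_factorial_mul_factorial, mul_assoc, ← sq, ← two_mul]
  gcongr
  exact n.centralBinom_le_four_pow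

theorem factorial_two_mul_le_mul_ascPochhammer_eval {K : Type*} [Field K] [LinearOrder K]
    [IsStrictOrderedRing K] {s : K} (hs : 0 < s) (n : ℕ) :
    ((2 * n).factorial : K) ≤
      4 ^ n * n.factorial * ((1 + n / s) * (ascPochhammer K n).eval s) := by
  calc ((2 * n).factorial : K)
    _ ≤ 4 ^ n * n.factorial * n.factorial := by
      rw [mul_assoc, ← sq]
      exact_mod_cast factorial_two_mul_le_four_pow_mul n
    _ ≤ 4 ^ n * n.factorial * (ascPochhammer K n).eval (s + 1) := by
      gcongr
      exact factorial_le_ascPochhammer_eval (le_add_of_nonneg_left hs.le) n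
    _ = 4 ^ n * n.factorial * ((1 + n / s) * (ascPochhammer K n).eval s) := by
      field_simp
      linear_combination mul_ascPochhammer_eval_add_one n s

theorem one_add_natCast_mul_le_mul_pow {K : Type*} [Field K] [LinearOrder K]
    [IsStrictOrderedRing K] {c r : K} (hc : 0 ≤ c) (hr : 1 < r) (n : ℕ) :
    1 + n * c ≤ (1 + c / (r - 1)) * r ^ n :=
  calc 1 + n * c
    _ ≤ r ^ n + r ^ n / (r - 1) * c := by
      gcongr
      · exact one_le_pow₀ hr.le
      · exact n.cast_le_pow_div_sub hr
    _ = (1 + c / (r - 1)) * r ^ n := by ring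

theorem hasSum_pi_fin_prod_of_nonneg {d : ℕ} {κ : Fin d → Type*} {f : ∀ i, κ i → ℝ}
    {s : Fin d → ℝ} (hf₀ : ∀ i k, 0 ≤ f i k) (hf : ∀ i, HasSum (f i) (s i)) :
    HasSum (fun n : ∀ i, κ i ↦ ∏ i, f i (n i)) (∏ i, s i) := by
  induction d with
  | zero => simp [hasSum_unique]
  | succ d ih =>
    have htail := ih (fun i ↦ hf₀ i.succ) (fun i ↦ hf i.succ)
    have htail₀ : 0 ≤ fun n : ∀ i : Fin d, κ i.succ ↦ ∏ i, f i.succ (n i) :=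
      fun n ↦ prod_nonneg fun i _ ↦ hf₀ i.succ (n i)
    have hsummable := (hf 0).summable.mul_of_nonneg htail.summable (hf₀ 0) htail₀
    have hmul := (hf 0).mul htail hsummable
    rw [← (Fin.consEquiv κ).hasSum_iff]
    simpa only [Function.comp_def, Fin.consEquiv_apply, Fin.prod_univ_succ, Fin.cons_zero,
      Fin.cons_succ] using hmul

theorem hasSum_pi_prod_of_nonneg {ι : Type*} [Fintype ι] {κ : ι → Type*} {f : ∀ i, κ i → ℝ}
    {s : ι → ℝ} (hf₀ : ∀ i k, 0 ≤ f i k) (hf : ∀ i, HasSum (f i) (s i)) :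
    HasSum (fun n : ∀ i, κ i ↦ ∏ i, f i (n i)) (∏ i, s i) := by
  let e := (Fintype.equivFin ι).symm
  rw [← (Equiv.piCongrLeft κ e).hasSum_iff, ← e.prod_comp]
  simpa [Function.comp_def, ← e.prod_comp] using
    hasSum_pi_fin_prod_of_nonneg (fun i ↦ hf₀ (e i)) (fun i ↦ hf (e i))

theorem hasSum_integral_mul_of_nonneg {α ι : Type*} [MeasurableSpace α] {μ : Measure α}
    [Countable ι] {g : α → ℂ} {F : ι → α → ℝ} {S : α → ℝ} (hg : AEStronglyMeasurable g μ)
    (hF : ∀ i, AEStronglyMeasurable (F i) μ) (hF₀ : ∀ i, ∀ᵐ x ∂μ, 0 ≤ F i x)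
    (hsum : ∀ᵐ x ∂μ, HasSum (F · x) (S x)) (hint : Integrable (fun x ↦ g x * S x) μ) :
    HasSum (fun i ↦ ∫ x, g x * F i x ∂μ) (∫ x, g x * S x ∂μ) := by
  refine hasSum_integral_of_dominated_convergence (fun i x ↦ ‖g x‖ * F i x)
    (fun i ↦ hg.mul (continuous_ofReal.comp_aestronglyMeasurable (hF i))) (fun i ↦ ?_)
    (hsum.mono fun x hx ↦ hx.summable.mul_left _) (hint.norm.congr ?_)
    (hsum.mono fun x hx ↦ (Complex.hasSum_ofReal.2 hx).mul_left _)
  · filter_upwards [hF₀ i] with x hx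
    rw [norm_mul, Complex.norm_of_nonneg hx]
  · filter_upwards [ae_all_iff.2 hF₀, hsum] with x hx₀ hx
    rw [norm_mul, Complex.norm_of_nonneg (hx.nonneg hx₀), (hx.mul_left _).tsum_eq]

/-- The `k`-th term of the series defining `besselI ν x`. -/
noncomputable def besselITerm (ν x : ℝ) (k : ℕ) : ℝ :=
  (x / 2) ^ (ν + 2 * (k : ℝ)) / ((k.factorial : ℝ) * Real.Gamma (ν + k + 1))

section Bessel

variable {ν x : ℝ}

theorem besselITerm_mul_right {c : ℝ} (hx : 0 ≤ x) (hc : 0 ≤ c) (k : ℕ) :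
    besselITerm ν (c * x) k = x ^ (ν + 2 * (k : ℝ)) * besselITerm ν c k := by
  rw [besselITerm, besselITerm, mul_div_right_comm, Real.mul_rpow (by positivity) hx]
  ring

theorem besselITerm_eq (hν : -1 < ν) (hx : 0 < x) (k : ℕ) :
    besselITerm ν x k = (x / 2) ^ ν / Real.Gamma (ν + 1) *
      ((x ^ 2 / 4) ^ k / (k.factorial * (ascPochhammer ℝ k).eval (ν + 1))) := by
  have hpow : (x / 2) ^ (ν + 2 * (k : ℝ)) = (x / 2) ^ ν * (x ^ 2 / 4) ^ k := by
    rw [Real.rpow_add (by positivity), ← Nat.cast_ofNat, ← Nat.cast_mul, Real.rpow_natCast,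
      pow_mul, div_pow]
    norm_num
  rw [besselITerm, hpow, add_right_comm, realGamma_add_natCast (by linarith)]
  ring

theorem besselITerm_nonneg (hν : -1 < ν) (hx : 0 ≤ x) (k : ℕ) : 0 ≤ besselITerm ν x k := by
  have := Real.Gamma_pos_of_pos (s := ν + k + 1) (by linarith [k.cast_nonneg (α := ℝ)])
  unfold besselITerm
  positivity

theorem besselITerm_le (hν : -1 < ν) (hx : 0 < x) (k : ℕ) :
    besselITerm ν x k ≤ (x / 2) ^ ν / Real.Gamma (ν + 1) *
      ((1 + k / (ν + 1)) * (x ^ (2 * k) / (2 * k).factorial)) := by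
  have hν₀ : 0 < ν + 1 := by linarith
  have := Real.Gamma_pos_of_pos hν₀
  have hP : 0 < (ascPochhammer ℝ k).eval (ν + 1) := ascPochhammer_pos k _ hν₀
  rw [besselITerm_eq hν hx]
  gcongr
  rw [div_pow, ← pow_mul, ← mul_div_assoc, div_div,
    div_le_div_iff₀ (by positivity) (by positivity)]
  calc x ^ (2 * k) * (2 * k).factorial
    _ ≤ x ^ (2 * k) *
        (4 ^ k * k.factorial * ((1 + k / (ν + 1)) * (ascPochhammer ℝ k).eval (ν + 1))) := by
      gcongr
      exact factorial_two_mul_le_mul_ascPochhammer_eval hν₀ k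
    _ = _ := by ring

theorem exists_besselITerm_le (hν : -1 < ν) {r : ℝ} (hr : 1 < r) :
    ∃ C : ℝ, 0 ≤ C ∧ ∀ x : ℝ, 0 < x → ∀ k : ℕ,
      besselITerm ν x k ≤ C * x ^ ν * ((r * x) ^ (2 * k) / (2 * k).factorial) := by
  have hν₀ : 0 < ν + 1 := by linarith
  have := Real.Gamma_pos_of_pos hν₀
  have hr₂ : 1 < r ^ 2 := one_lt_pow₀ hr two_ne_zero
  set A := 1 + (ν + 1)⁻¹ / (r ^ 2 - 1)
  have : 0 ≤ A := by
    have := sub_pos.2 hr₂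
    positivity
  refine ⟨A / (2 ^ ν * Real.Gamma (ν + 1)), by positivity, fun x hx k ↦ ?_⟩
  calc besselITerm ν x k
    _ ≤ (x / 2) ^ ν / Real.Gamma (ν + 1) *
        ((1 + k / (ν + 1)) * (x ^ (2 * k) / (2 * k).factorial)) := besselITerm_le hν hx k
    _ ≤ (x / 2) ^ ν / Real.Gamma (ν + 1) *
        (A * (r ^ 2) ^ k * (x ^ (2 * k) / (2 * k).factorial)) := by
      gcongr
      exact one_add_natCast_mul_le_mul_pow (by positivity) hr₂ k
    _ = _ := by
      rw [Real.div_rpow hx.le zero_le_two, mul_pow, ← pow_mul]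
      ring

theorem hasSum_besselI (hν : -1 < ν) (hx : 0 < x) :
    HasSum (besselITerm ν x) (besselI ν x) := by
  obtain ⟨C, -, hC⟩ := exists_besselITerm_le hν one_lt_two
  exact (((Real.hasSum_cosh (2 * x)).summable.mul_left _).of_nonneg_of_le
    (besselITerm_nonneg hν hx.le) (hC x hx)).hasSum

theorem besselI_nonneg (hν : -1 < ν) (hx : 0 ≤ x) : 0 ≤ besselI ν x :=
  tsum_nonneg (besselITerm_nonneg hν hx)

theorem measurable_besselITerm (ν : ℝ) (k : ℕ) : Measurable (besselITerm ν · k) := by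
  unfold besselITerm
  fun_prop

theorem measurable_besselI (ν : ℝ) : Measurable (besselI ν) :=
  Measurable.tsum (measurable_besselITerm ν)

theorem exists_besselI_le (hν : -1 < ν) {r : ℝ} (hr : 1 < r) :
    ∃ C : ℝ, ∀ x : ℝ, 0 < x → besselI ν x ≤ C * x ^ ν * Real.exp (r * x) := by
  obtain ⟨C, hC₀, hC⟩ := exists_besselITerm_le hν hr
  refine ⟨C, fun x hx ↦ ?_⟩
  have hrx : 0 ≤ r * x := by positivity
  calc besselI ν x
    _ ≤ C * x ^ ν * Real.cosh (r * x) :=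
      hasSum_le (hC x hx) (hasSum_besselI hν hx) ((Real.hasSum_cosh _).mul_left _)
    _ ≤ C * x ^ ν * Real.exp (r * x) := by
      gcongr
      linarith [Real.sinh_nonneg_iff.2 hrx, Real.cosh_add_sinh (r * x)]

theorem ofReal_besselITerm_mul_pow (hν : -1 < ν) (hx : 0 < x) (q : ℂ) (k : ℕ) :
    (besselITerm ν x k : ℂ) * (4 * q) ^ k =
      ((x ^ ν / Real.Gamma (ν + 1) : ℝ) : ℂ) / (2 ^ ν : ℝ) *
        ((x ^ 2 * q) ^ k / k.factorial / (ascPochhammer ℂ k).eval (ν + 1 : ℂ)) := by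
  rw [besselITerm_eq hν hx, Real.div_rpow hx.le zero_le_two, mul_pow, mul_pow, div_pow]
  simp only [ofReal_mul, ofReal_div, ofReal_pow, ofReal_natCast, ofReal_ascPochhammer_eval,
    ofReal_add, ofReal_one, ofReal_ofNat]
  field_simp

end Bessel

theorem integral_exp_mul_cpow_Ioi {z : ℂ} {p : ℝ} (hz : -1 < z.re) (hp : 0 < p) :
    ∫ x in Set.Ioi (0 : ℝ), cexp (-(p : ℂ) * x) * (x : ℂ) ^ z =
      Complex.Gamma (z + 1) / (p : ℂ) ^ (z + 1) := by
  have hz₁ : 0 < (z + 1).re := by simpa using neg_lt_iff_pos_add.1 hz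
  have harg : (p : ℂ).arg ≠ π := by simpa [arg_ofReal_of_nonneg hp.le] using pi_ne_zero.symm
  have h := Complex.integral_cpow_mul_exp_neg_mul_Ioi hz₁ hp
  rw [one_div, inv_cpow _ _ harg, add_sub_cancel_right, inv_mul_eq_div] at h
  simpa only [neg_mul, mul_comm (cexp _)] using h

theorem Gamma_add_two_mul_div_cpow {z p : ℂ} (hz : 0 < z.re) (hp : p ≠ 0) (n : ℕ) :
    Complex.Gamma (z + 2 * n) / p ^ (z + 2 * n) = Complex.Gamma z / p ^ z *
      ((ascPochhammer ℂ n).eval (z / 2) * (ascPochhammer ℂ n).eval ((z + 1) / 2) *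
        (4 / p ^ 2) ^ n) := by
  rw [← Nat.cast_ofNat, ← Nat.cast_mul, complexGamma_add_natCast hz, ascPochhammer_two_mul_eval,
    cpow_add _ _ hp, cpow_natCast, pow_mul, div_pow]
  push_cast
  ring

/-- The term of multi-index `n` in the series defining the Lauricella function `F_C`. -/
noncomputable def lauricellaFCTerm {ι : Type*} [Fintype ι] (α β : ℂ) (γ x : ι → ℂ)
    (n : ι → ℕ) : ℂ :=
  (ascPochhammer ℂ (∑ j, n j)).eval α * (ascPochhammer ℂ (∑ j, n j)).eval β /
    (∏ j, (ascPochhammer ℂ (n j)).eval (γ j)) * ∏ j, (x j ^ n j / ((n j).factorial : ℂ))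

/-- The Lauricella function `F_C(α, β; γ; x)` of several variables, with the variables and their
parameters `γ` indexed by an arbitrary finite type instead of `1, …, d`. Its value is `0`
where the series does not converge absolutely. -/
noncomputable def lauricellaFC {ι : Type*} [Fintype ι] (α β : ℂ) (γ x : ι → ℂ) : ℂ :=
  ∑' n : ι → ℕ, lauricellaFCTerm α β γ x n

section Laplace

variable {ι : Type*} [Fintype ι] {ν a : ι → ℝ} {lam : ℂ} {p : ℝ}

theorem prod_besselITerm_mul_right (ha : ∀ j, 0 ≤ a j) {x : ℝ} (hx : 0 < x) (n : ι → ℕ) :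
    ∏ j, besselITerm (ν j) (a j * x) (n j) =
      x ^ (∑ j, ν j + 2 * (∑ j, n j : ℕ)) * ∏ j, besselITerm (ν j) (a j) (n j) := by
  simp only [besselITerm_mul_right hx.le (ha _), prod_mul_distrib, ← Real.rpow_sum_of_pos hx,
    sum_add_distrib, ← mul_sum, Nat.cast_sum]

theorem ofReal_prod_besselITerm_mul_pow (hν : ∀ j, -1 < ν j) (ha : ∀ j, 0 < a j) (q : ℂ)
    (n : ι → ℕ) :
    ((∏ j, besselITerm (ν j) (a j) (n j) : ℝ) : ℂ) * (4 * q) ^ (∑ j, n j) =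
      (∏ j, a j ^ ν j / Real.Gamma (ν j + 1) : ℝ) / (2 ^ (∑ j, ν j) : ℝ) *
        ((∏ j, (a j ^ 2 * q) ^ n j / (n j).factorial) /
          ∏ j, (ascPochhammer ℂ (n j)).eval (ν j + 1 : ℂ)) := by
  rw [Real.rpow_sum_of_pos two_pos, ← prod_pow_eq_pow_sum, ofReal_prod, ofReal_prod, ofReal_prod]
  simp only [← prod_mul_distrib, ← prod_div_distrib, ofReal_besselITerm_mul_pow (hν _) (ha _)]

theorem cpow_mul_prod_besselITerm (ha : ∀ j, 0 ≤ a j) {x : ℝ} (hx : 0 < x) (n : ι → ℕ) :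
    (x : ℂ) ^ lam * (∏ j, besselITerm (ν j) (a j * x) (n j) : ℝ) =
      (x : ℂ) ^ (lam + (∑ j, ν j : ℝ) + 2 * (∑ j, n j : ℕ)) *
        (∏ j, besselITerm (ν j) (a j) (n j) : ℝ) := by
  rw [prod_besselITerm_mul_right ha hx, add_assoc lam, cpow_add _ _ (ofReal_ne_zero.2 hx.ne'),
    ofReal_mul, ofReal_cpow hx.le]
  simp only [ofReal_add, ofReal_mul, ofReal_natCast, ofReal_ofNat, mul_assoc]

theorem integral_exp_mul_cpow_mul_prod_besselITerm (hν : ∀ j, -1 < ν j)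
    (hl : -1 < lam.re + ∑ j, ν j) (ha : ∀ j, 0 < a j) (hp : 0 < p) (n : ι → ℕ) :
    ∫ x in Set.Ioi (0 : ℝ), cexp (-(p : ℂ) * x) * (x : ℂ) ^ lam *
        (∏ j, besselITerm (ν j) (a j * x) (n j) : ℝ) =
      Complex.Gamma (lam + (∑ j, ν j : ℝ) + 1) /
          ((2 : ℂ) ^ ((∑ j, ν j : ℝ) : ℂ) * (p : ℂ) ^ (lam + (∑ j, ν j : ℝ) + 1)) *
        (∏ j, a j ^ ν j / Real.Gamma (ν j + 1) : ℝ) *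
        lauricellaFCTerm ((lam + (∑ j, ν j : ℝ) + 1) / 2) ((lam + (∑ j, ν j : ℝ)) / 2 + 1)
          (fun j ↦ ν j + 1) (fun j ↦ a j ^ 2 / p ^ 2) n := by
  have hprod := ofReal_prod_besselITerm_mul_pow hν ha (1 / (p : ℂ) ^ 2) n
  rw [ofReal_cpow zero_le_two, ofReal_ofNat] at hprod
  simp only [mul_one_div] at hprod
  have hintegrand : ∀ x ∈ Set.Ioi (0 : ℝ), cexp (-(p : ℂ) * x) * (x : ℂ) ^ lam *
        (∏ j, besselITerm (ν j) (a j * x) (n j) : ℝ) =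
      cexp (-(p : ℂ) * x) * (x : ℂ) ^ (lam + (∑ j, ν j : ℝ) + 2 * (∑ j, n j : ℕ)) *
        (∏ j, besselITerm (ν j) (a j) (n j) : ℝ) := fun x hx ↦ by
    rw [mul_assoc, cpow_mul_prod_besselITerm (fun j ↦ (ha j).le) hx, ← mul_assoc]
  rw [setIntegral_congr_fun measurableSet_Ioi hintegrand, lauricellaFCTerm]
  set s : ℝ := ∑ j, ν j
  set N : ℕ := ∑ j, n j
  have hre : 0 < (lam + s + 1).re := by
    simpa using neg_lt_iff_pos_add.1 hl
  have hreN : -1 < (lam + s + 2 * N).re := by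
    simpa using hl.trans_le (le_add_of_nonneg_right (by positivity : (0 : ℝ) ≤ 2 * N))
  have hhalf : (lam + s) / 2 + 1 = (lam + s + 1 + 1) / 2 := by ring
  rw [integral_mul_const, integral_exp_mul_cpow_Ioi hreN hp, add_right_comm,
    Gamma_add_two_mul_div_cpow hre (ofReal_ne_zero.2 hp.ne'), hhalf]
  linear_combination Complex.Gamma (lam + s + 1) / (p : ℂ) ^ (lam + s + 1) *
    (ascPochhammer ℂ N).eval ((lam + s + 1) / 2) *
    (ascPochhammer ℂ N).eval ((lam + s + 1 + 1) / 2) * hprod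

theorem exists_prod_besselI_le (hν : ∀ j, -1 < ν j) (ha : ∀ j, 0 < a j) {r : ℝ} (hr : 1 < r) :
    ∃ C : ℝ, ∀ x : ℝ, 0 < x →
      ∏ j, besselI (ν j) (a j * x) ≤ C * (x ^ (∑ j, ν j) * Real.exp (r * (∑ j, a j) * x)) := by
  choose C hC using fun j ↦ exists_besselI_le (hν j) hr
  refine ⟨∏ j, C j * a j ^ ν j, fun x hx ↦ ?_⟩
  have hax (j : ι) : 0 < a j * x := mul_pos (ha j) hx
  calc ∏ j, besselI (ν j) (a j * x)
    _ ≤ ∏ j, C j * (a j * x) ^ ν j * Real.exp (r * (a j * x)) :=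
      prod_le_prod (fun j _ ↦ besselI_nonneg (hν j) (hax j).le) fun j _ ↦ hC j _ (hax j)
    _ = ∏ j, (C j * a j ^ ν j) * (x ^ ν j * Real.exp (r * a j * x)) :=
      prod_congr rfl fun j _ ↦ by
        rw [Real.mul_rpow (ha j).le hx.le]
        ring_nf
    _ = _ := by
      rw [prod_mul_distrib, prod_mul_distrib (f := fun j ↦ x ^ ν j), ← Real.rpow_sum_of_pos hx,
        ← Real.exp_sum, ← sum_mul, ← mul_sum]

theorem exists_one_lt_mul_lt {S p : ℝ} (h : S < p) : ∃ r : ℝ, 1 < r ∧ r * S < p := by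
  have hcont : ContinuousAt (· * S) (1 : ℝ) := by fun_prop
  have hlt : ∀ᶠ r : ℝ in nhds 1, r * S < p := hcont.eventually_lt_const (by simpa using h)
  obtain ⟨r, hr⟩ := ((eventually_nhdsWithin_of_eventually_nhds hlt).and
    (self_mem_nhdsWithin (s := Set.Ioi (1 : ℝ)))).exists
  exact ⟨r, hr.symm⟩

theorem measurable_prod_besselI (ν a : ι → ℝ) :
    Measurable fun x ↦ ∏ j, besselI (ν j) (a j * x) :=
  Finset.measurable_fun_prod _ fun j _ ↦ (measurable_besselI (ν j)).comp (measurable_const_mul _)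

theorem measurable_exp_mul_cpow (p lam : ℂ) :
    Measurable fun x : ℝ ↦ cexp (-p * x) * (x : ℂ) ^ lam := by
  fun_prop

theorem integrableOn_exp_mul_cpow_mul_prod_besselI (hν : ∀ j, -1 < ν j)
    (hl : -1 < lam.re + ∑ j, ν j) (ha : ∀ j, 0 < a j) (hp : ∑ j, a j < p) :
    IntegrableOn (fun x : ℝ ↦ cexp (-(p : ℂ) * x) * (x : ℂ) ^ lam *
      (∏ j, besselI (ν j) (a j * x) : ℝ)) (Set.Ioi 0) := by
  obtain ⟨r, hr, hrp⟩ := exists_one_lt_mul_lt hp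
  obtain ⟨C, hC⟩ := exists_prod_besselI_le hν ha hr
  have hmajorant := integrableOn_rpow_mul_exp_neg_mul_rpow hl one_pos (sub_pos.2 hrp)
  refine (hmajorant.const_mul C).mono' ((measurable_exp_mul_cpow p lam).mul
    (measurable_prod_besselI ν a).complex_ofReal).aestronglyMeasurable ?_
  filter_upwards [ae_restrict_mem measurableSet_Ioi] with x (hx : 0 < x)
  have hprod : 0 ≤ ∏ j, besselI (ν j) (a j * x) :=
    prod_nonneg fun j _ ↦ besselI_nonneg (hν j) (mul_pos (ha j) hx).le
  calc ‖cexp (-(p : ℂ) * x) * (x : ℂ) ^ lam * (∏ j, besselI (ν j) (a j * x) : ℝ)‖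
    _ = Real.exp (-p * x) * x ^ lam.re * ∏ j, besselI (ν j) (a j * x) := by
      rw [norm_mul, norm_mul, norm_exp, norm_cpow_eq_rpow_re_of_pos hx,
        Complex.norm_of_nonneg hprod]
      simp
    _ ≤ Real.exp (-p * x) * x ^ lam.re *
        (C * (x ^ (∑ j, ν j) * Real.exp (r * (∑ j, a j) * x))) := by
      gcongr
      exact hC x hx
    _ = C * (x ^ (lam.re + ∑ j, ν j) * Real.exp (-(p - r * ∑ j, a j) * x ^ (1 : ℝ))) := by
      rw [Real.rpow_add hx, Real.rpow_one, neg_sub, sub_mul, sub_eq_add_neg, Real.exp_add, neg_mul]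
      ring

theorem hasSum_prod_besselITerm (hν : ∀ j, -1 < ν j) {x : ι → ℝ} (hx : ∀ j, 0 < x j) :
    HasSum (fun n : ι → ℕ ↦ ∏ j, besselITerm (ν j) (x j) (n j)) (∏ j, besselI (ν j) (x j)) :=
  hasSum_pi_prod_of_nonneg (fun j ↦ besselITerm_nonneg (hν j) (hx j).le)
    fun j ↦ hasSum_besselI (hν j) (hx j)

theorem hasSum_integral_exp_mul_cpow_mul_prod_besselITerm (hν : ∀ j, -1 < ν j)
    (hl : -1 < lam.re + ∑ j, ν j) (ha : ∀ j, 0 < a j) (hp : ∑ j, a j < p) :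
    HasSum (fun n : ι → ℕ ↦ ∫ x in Set.Ioi (0 : ℝ), cexp (-(p : ℂ) * x) * (x : ℂ) ^ lam *
        (∏ j, besselITerm (ν j) (a j * x) (n j) : ℝ))
      (∫ x in Set.Ioi (0 : ℝ), cexp (-(p : ℂ) * x) * (x : ℂ) ^ lam *
        (∏ j, besselI (ν j) (a j * x) : ℝ)) := by
  have hpos {x : ℝ} (hx : x ∈ Set.Ioi 0) (j : ι) : 0 < a j * x := mul_pos (ha j) hx
  refine hasSum_integral_mul_of_nonneg (measurable_exp_mul_cpow p lam).aestronglyMeasurable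
    (fun n ↦ ?_) (fun n ↦ ?_) ?_ (integrableOn_exp_mul_cpow_mul_prod_besselI hν hl ha hp)
  · exact (Finset.measurable_fun_prod _ fun j _ ↦
      (measurable_besselITerm (ν j) (n j)).comp (measurable_const_mul _)).aestronglyMeasurable
  · filter_upwards [ae_restrict_mem measurableSet_Ioi] with x hx
    exact prod_nonneg fun j _ ↦ besselITerm_nonneg (hν j) (hpos hx j).le (n j)
  · filter_upwards [ae_restrict_mem measurableSet_Ioi] with x hx
    exact hasSum_prod_besselITerm hν (hpos hx)

end Laplace

theorem laplace_transform_prod_besselI_general {ι : Type*} [Fintype ι] {ν : ι → ℝ}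
    (hν : ∀ j, -1 < ν j) {lam : ℂ} (hl : -1 < lam.re + ∑ j, ν j)
    {a : ι → ℝ} (ha : ∀ j, 0 < a j) {p : ℝ} (hp : ∑ j, a j < p) :
    IntegrableOn
      (fun x : ℝ ↦ cexp (-(p : ℂ) * x) * (x : ℂ) ^ lam *
        ∏ j, (besselI (ν j) (a j * x) : ℂ)) (Set.Ioi 0) ∧
    (∫ x in Set.Ioi (0 : ℝ), cexp (-(p : ℂ) * x) * (x : ℂ) ^ lam *
        ∏ j, (besselI (ν j) (a j * x) : ℂ)) =
      Complex.Gamma (lam + (∑ j, ν j : ℝ) + 1) /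
          ((2 : ℂ) ^ ((∑ j, ν j : ℝ) : ℂ) * (p : ℂ) ^ (lam + (∑ j, ν j : ℝ) + 1)) *
        (∏ j, ((a j ^ ν j / Real.Gamma (ν j + 1) : ℝ) : ℂ)) *
        lauricellaFC ((lam + (∑ j, ν j : ℝ) + 1) / 2) ((lam + (∑ j, ν j : ℝ)) / 2 + 1)
          (fun j ↦ ν j + 1) (fun j ↦ a j ^ 2 / p ^ 2) := by
  have hp₀ : 0 < p := (sum_nonneg fun j _ ↦ (ha j).le).trans_lt hp
  simp only [← ofReal_prod]
  refine ⟨integrableOn_exp_mul_cpow_mul_prod_besselI hν hl ha hp, ?_⟩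
  rw [← (hasSum_integral_exp_mul_cpow_mul_prod_besselITerm hν hl ha hp).tsum_eq, lauricellaFC,
    ← tsum_mul_left]
  exact tsum_congr (integral_exp_mul_cpow_mul_prod_besselITerm hν hl ha hp₀)

/-- Corrected Laplace transform formula (case `p > a₁ + ⋯ + a_d`):
`∫₀^∞ e^{-px} x^λ ∏_j I_{ν_j}(a_j x) dx = Γ(λ+ν+1)/(2^ν p^{λ+ν+1}) ⬝ ∏_j a_j^{ν_j}/Γ(ν_j+1)
  ⬝ F_C^{(d)}((λ+ν+1)/2, (λ+ν)/2+1; ν₁+1, …, ν_d+1; a₁²/p², …, a_d²/p²)`,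
with the integral converging absolutely. -/
theorem laplace_transform_prod_besselI (d : ℕ) (hd : 0 < d) (ν : Fin d → ℝ)
    (hν : ∀ j, -1 < ν j) (lam : ℂ) (hl : -1 < lam.re + ∑ j, ν j)
    (a : Fin d → ℝ) (ha : ∀ j, 0 < a j) (p : ℝ) (hp : ∑ j, a j < p) :
    IntegrableOn
      (fun x : ℝ => Complex.exp (-(p : ℂ) * x) * (x : ℂ) ^ lam *
        ∏ j, (besselI (ν j) (a j * x) : ℂ)) (Set.Ioi 0) ∧
    (∫ x in Set.Ioi (0 : ℝ), Complex.exp (-(p : ℂ) * x) * (x : ℂ) ^ lam *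
        ∏ j, (besselI (ν j) (a j * x) : ℂ)) =
      Complex.Gamma (lam + (∑ j, ν j : ℝ) + 1) /
          ((2 : ℂ) ^ ((∑ j, ν j : ℝ) : ℂ) * (p : ℂ) ^ (lam + (∑ j, ν j : ℝ) + 1)) *
        (∏ j, ((a j ^ (ν j) / Real.Gamma (ν j + 1) : ℝ) : ℂ)) *
        ∑' n : Fin d → ℕ,
          (ascPochhammer ℂ (∑ j, n j)).eval ((lam + (∑ j, ν j : ℝ) + 1) / 2) *
            (ascPochhammer ℂ (∑ j, n j)).eval ((lam + (∑ j, ν j : ℝ)) / 2 + 1) /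
            (∏ j, (((ascPochhammer ℝ (n j)).eval (ν j + 1) : ℝ) : ℂ)) *
            ∏ j, (((a j ^ 2 / p ^ 2 : ℝ) : ℂ) ^ (n j) / ((n j).factorial : ℂ)) := by
  simpa only [lauricellaFC, lauricellaFCTerm, ofReal_ascPochhammer_eval, ofReal_add, ofReal_one,
    ofReal_div, ofReal_pow] using laplace_transform_prod_besselI_general hν hl ha hp
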